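/- Let γ ∈ (0,1]. There is a constant C depending only on γ with the following property. Let h > 0, F ∈ ℝ³, n̄ a unit vector, and 0 < β⁻ ≤ β⁺. Let P be a tetrahedron and S a Lebesgue-measurable set with P ⊆ S ⊆ [0,h]³, vol(P) ≥ γh³, and F ∈ closure(P). Then for every p ∈ Q₁ and j ∈ {0,1}: |C_T⁻¹(p)|_{H^j(S)} ≤ C (β⁺/β⁻) |p|_{H^j(S)}. (This is the stability estimate of Lemma 4.3 / Lemma 4.4 for the inverse extension operator C_T⁻¹, with the coefficient-ratio factor β⁺/β⁻.) -/

import Mathlib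

/-!
The operator changes `p` by `(β⁺/β⁻ - 1) (∇p(F)·n̄) L`, so by the triangle inequality everything
reduces to bounding the single number `∇p(F)·n̄` by the integrals over `S`. On the cube,
`|L| ≤ √3 h` and `|∇L| = 1`, so what is needed is

* `h³ (h ∇p(F)·n̄)² ≤ K ∫_S p²` for `j = 0`,
* `h³ (∇p(F)·n̄)² ≤ K ∫_S (∇p·n̄)² ≤ K ∫_S |∇p|²` for `j = 1`,

with `K` depending only on `γ`. Since `∇p·n̄` is again trilinear, both follow from one fact
(`exists_lower`): after rescaling to the unit cube, the coefficients of a trilinear polynomial are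
bounded by its `L²` norm over any measurable set of measure at least `γ`.

That fact is a compactness argument. A nonzero trilinear polynomial has a null zero set
(`q1_ae_ne`), so its small sublevel sets have small measure, uniformly over the compact unit sphere
of coefficient vectors (`exists_uniform_sublevel`). Hence at some level `δ` depending only on `γ`
the sublevel set takes up at most half of `S`, and the other half contributes at least
`δ² γ / 2` to the integral (`exists_unit_lower`).
-/


open MeasureTheory
open scoped RealInnerProductSpace ENNReal

noncomputable section

abbrev V3 : Type := EuclideanSpace ℝ (Fin 3)

/-- `Q₁`: the space of trilinear polynomials on `ℝ³`. -/
def IsQ1 (p : V3 → ℝ) : Prop :=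
  ∃ a₀ a₁ a₂ a₃ a₄ a₅ a₆ a₇ : ℝ, ∀ x : V3,
    p x = a₀ + a₁ * x 0 + a₂ * x 1 + a₃ * x 2
      + a₄ * (x 0 * x 1) + a₅ * (x 0 * x 2) + a₆ * (x 1 * x 2)
      + a₇ * (x 0 * x 1 * x 2)

/-- The cube `T = [0,h]³`. -/
def cube (h : ℝ) : Set V3 := {X | ∀ i, X i ∈ Set.Icc (0:ℝ) h}

/-- `P` is a tetrahedron: the convex hull of four affinely independent points. -/
def IsTetra (P : Set V3) : Prop :=
  ∃ v : Fin 4 → V3, AffineIndependent ℝ v ∧ P = convexHull ℝ (Set.range v)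

/-- The extension operator `C_T(p) = p + (β⁻/β⁺ − 1)(∇p(F)·n̄) L`, `L(X) = (X−F)·n̄`. -/
def CT (βm βp : ℝ) (F nbar : V3) (p : V3 → ℝ) : V3 → ℝ :=
  fun X => p X + (βm / βp - 1) * (fderiv ℝ p F nbar) * ⟪X - F, nbar⟫

/-- `f` is a closed face of the cube `[0,h]³` with unit normal `nf`. -/
def IsFace (h : ℝ) (f : Set V3) (nf : V3) : Prop :=
  ∃ i : Fin 3, (nf = EuclideanSpace.single i 1 ∨ nf = -EuclideanSpace.single i 1) ∧
    (f = {X ∈ cube h | X i = 0} ∨ f = {X ∈ cube h | X i = h})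

/-- The inverse extension operator `C_T⁻¹(q) = q + (β⁺/β⁻ − 1)(∇q(F)·n̄) L`. -/
def CTinv (βm βp : ℝ) (F nbar : V3) (q : V3 → ℝ) : V3 → ℝ :=
  fun X => q X + (βp / βm - 1) * (fderiv ℝ q F nbar) * ⟪X - F, nbar⟫

/-! ### Trilinear polynomials and integration over the cube -/

/-- The trilinear polynomial with coefficient vector `c`, in the order
`1, x, y, z, xy, xz, yz, xyz`. The coefficient space `Fin 8 → ℝ` carries the sup norm. -/
def q1 (c : Fin 8 → ℝ) (x : V3) : ℝ :=
  c 0 + c 1 * x 0 + c 2 * x 1 + c 3 * x 2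
    + c 4 * (x 0 * x 1) + c 5 * (x 0 * x 2) + c 6 * (x 1 * x 2) + c 7 * (x 0 * x 1 * x 2)

lemma continuous_q1 (c : Fin 8 → ℝ) : Continuous (q1 c) := by
  unfold q1; fun_prop

lemma isCompact_cube (h : ℝ) : IsCompact (cube h) := by
  have : cube h = (EuclideanSpace.equiv (Fin 3) ℝ).toHomeomorph ⁻¹'
      (Set.Icc (fun _ => 0) (fun _ => h)) := by
    ext X
    simp [cube, Set.mem_Icc, Pi.le_def, forall_and]
  rw [this, Homeomorph.isCompact_preimage]
  exact isCompact_Icc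

lemma volume_cube {h : ℝ} : volume (cube h) = ENNReal.ofReal h ^ 3 := by
  have : cube h = (WithLp.ofLp (p := 2)) ⁻¹'
      (Set.Icc (fun _ : Fin 3 => (0 : ℝ)) (fun _ => h)) := by
    ext X
    simp [cube, Set.mem_Icc, Pi.le_def, forall_and]
  rw [this, (PiLp.volume_preserving_ofLp (Fin 3)).measure_preimage
    measurableSet_Icc.nullMeasurableSet, Real.volume_Icc_pi]
  simp

lemma integrableOn_of_cube {h : ℝ} {S : Set V3} (hS : S ⊆ cube h) {f : V3 → ℝ}
    (hf : Continuous f) : IntegrableOn f S :=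
  (hf.continuousOn.integrableOn_compact (isCompact_cube h)).mono_set hS

/-! ### Zero sets of nonzero trilinear polynomials are null -/

lemma cubic_ae_ne (c₀ c₁ c₂ c₃ : ℝ) (hc : c₀ ≠ 0 ∨ c₁ ≠ 0 ∨ c₂ ≠ 0 ∨ c₃ ≠ 0) :
    ∀ᵐ t : ℝ, c₀ + c₁ * t + c₂ * t ^ 2 + c₃ * t ^ 3 ≠ 0 := by
  let P : Polynomial ℝ := .C c₀ + .C c₁ * .X + .C c₂ * .X ^ 2 + .C c₃ * .X ^ 3
  have hP : P ≠ 0 := by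
    intro h0
    have h (n : ℕ) : P.coeff n = 0 := by simp [h0]
    have a0 := h 0
    have a1 := h 1
    have a2 := h 2
    have a3 := h 3
    simp [P, Polynomial.coeff_X, Polynomial.coeff_C, Polynomial.coeff_X_pow] at a0 a1 a2 a3
    tauto
  have hfin : {t : ℝ | P.IsRoot t}.Finite := Polynomial.finite_setOfPred_isRoot hP
  have := hfin.measure_zero volume
  rw [ae_iff]
  convert this using 3
  simp [P, Polynomial.IsRoot]

/-- Fubini along a single direction `v`: if the restriction of `q1 c` to every line parallel to `v`
is a nonzero polynomial of degree at most three, the zero set of `q1 c` is null. -/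
lemma null_of_line {c : Fin 8 → ℝ} (v : V3)
    (h : ∀ y : V3, ∃ c₀ c₁ c₂ c₃ : ℝ, (c₀ ≠ 0 ∨ c₁ ≠ 0 ∨ c₂ ≠ 0 ∨ c₃ ≠ 0) ∧
      ∀ t : ℝ, q1 c (y + t • v) = c₀ + c₁ * t + c₂ * t ^ 2 + c₃ * t ^ 3) :
    ∀ᵐ x : V3, q1 c x ≠ 0 := by
  have hm : MeasurableSet {x : V3 | q1 c x ≠ 0} :=
    (isOpen_ne_fun (continuous_q1 c) continuous_const).measurableSet
  refine ae_mem_of_ae_add_linearMap_mem ((LinearMap.id (R := ℝ) (M := ℝ)).smulRight v)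
    volume volume hm fun y => ?_
  obtain ⟨c₀, c₁, c₂, c₃, hc, he⟩ := h y
  filter_upwards [cubic_ae_ne c₀ c₁ c₂ c₃ hc] with t ht
  change q1 c (y + t • v) ≠ 0
  rwa [he]

lemma q1_ae_ne {c : Fin 8 → ℝ} (hc : c ≠ 0) : ∀ᵐ x : V3, q1 c x ≠ 0 := by
  -- Pick a monomial of maximal degree with nonzero coefficient and let `v` be the indicator vector
  -- of its variables. The leading coefficient along `v` is then the same nonzero number on every
  -- line, since the other monomials of that degree are either absent or vanish at `v`.
  by_cases h7 : c 7 = 0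
  swap
  · refine null_of_line !₂[1, 1, 1] fun y => ⟨q1 c y,
      c 1 + c 2 + c 3 + c 4 * (y 0 + y 1) + c 5 * (y 0 + y 2) + c 6 * (y 1 + y 2)
        + c 7 * (y 0 * y 1 + y 0 * y 2 + y 1 * y 2),
      c 4 + c 5 + c 6 + c 7 * (y 0 + y 1 + y 2), c 7, by tauto, fun t => ?_⟩
    simp [q1]; ring
  by_cases h6 : c 6 = 0
  swap
  · refine null_of_line !₂[0, 1, 1] fun y => ⟨q1 c y,
      c 2 + c 3 + c 4 * y 0 + c 5 * y 0 + c 6 * (y 1 + y 2), c 6, 0, by tauto, fun t => ?_⟩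
    simp [q1, h7]; ring
  by_cases h5 : c 5 = 0
  swap
  · refine null_of_line !₂[1, 0, 1] fun y => ⟨q1 c y,
      c 1 + c 3 + c 4 * y 1 + c 5 * (y 0 + y 2), c 5, 0, by tauto, fun t => ?_⟩
    simp [q1, h7, h6]; ring
  by_cases h4 : c 4 = 0
  swap
  · refine null_of_line !₂[1, 1, 0] fun y => ⟨q1 c y,
      c 1 + c 2 + c 4 * (y 0 + y 1), c 4, 0, by tauto, fun t => ?_⟩
    simp [q1, h7, h6, h5]; ring
  by_cases h3 : c 3 = 0
  swap
  · refine null_of_line !₂[0, 0, 1] fun y => ⟨q1 c y, c 3, 0, 0, by tauto, fun t => ?_⟩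
    simp [q1, h7, h6, h5, h4]; ring
  by_cases h2 : c 2 = 0
  swap
  · refine null_of_line !₂[0, 1, 0] fun y => ⟨q1 c y, c 2, 0, 0, by tauto, fun t => ?_⟩
    simp [q1, h7, h6, h5, h4, h3]; ring
  by_cases h1 : c 1 = 0
  swap
  · refine null_of_line !₂[1, 0, 0] fun y => ⟨q1 c y, c 1, 0, 0, by tauto, fun t => ?_⟩
    simp [q1, h7, h6, h5, h4, h3, h2]; ring
  have h0 : c 0 ≠ 0 := by
    intro h0
    apply hc
    ext i
    fin_cases i <;> simpa
  exact .of_forall fun x => by simpa [q1, h7, h6, h5, h4, h3, h2, h1] using h0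

/-! ### Uniform lower bound for the `L²` norm on the unit cube -/

lemma abs_q1_le (c : Fin 8 → ℝ) {X : V3} (hX : X ∈ cube 1) : |q1 c X| ≤ 8 * ‖c‖ := by
  have hc (i : Fin 8) : |c i| ≤ ‖c‖ := norm_le_pi_norm c i
  have hX' (i : Fin 3) : |X i| ≤ 1 := by
    rw [abs_of_nonneg (hX i).1]; exact (hX i).2
  have h2 (i j : Fin 3) : |X i * X j| ≤ 1 := by
    rw [abs_mul]; exact mul_le_one₀ (hX' i) (abs_nonneg _) (hX' j)
  have h3 : |X 0 * X 1 * X 2| ≤ 1 := by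
    rw [abs_mul]; exact mul_le_one₀ (h2 0 1) (abs_nonneg _) (hX' 2)
  have key (i : Fin 8) {m : ℝ} (hm : |m| ≤ 1) : |c i * m| ≤ ‖c‖ := by
    rw [abs_mul]
    exact (mul_le_of_le_one_right (abs_nonneg _) hm).trans (hc i)
  unfold q1
  have := abs_le.1 (hc 0)
  have := abs_le.1 (key 1 (hX' 0))
  have := abs_le.1 (key 2 (hX' 1))
  have := abs_le.1 (key 3 (hX' 2))
  have := abs_le.1 (key 4 (h2 0 1))
  have := abs_le.1 (key 5 (h2 0 2))
  have := abs_le.1 (key 6 (h2 1 2))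
  have := abs_le.1 (key 7 h3)
  rw [abs_le]
  constructor <;> linarith

/-- Continuity from above of the measure: the sublevel sets decrease to the null zero set. -/
lemma exists_sublevel_small {c : Fin 8 → ℝ} (hc : c ≠ 0) {η : ℝ} (hη : 0 < η) :
    ∃ δ > 0, volume {X ∈ cube 1 | |q1 c X| ≤ δ} ≤ ENNReal.ofReal η := by
  let s : ℝ → Set V3 := fun r => {X ∈ cube 1 | |q1 c X| ≤ r}
  have hs (r) : IsClosed (s r) :=
    (isCompact_cube 1).isClosed.inter (isClosed_le (continuous_q1 c).abs continuous_const)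
  have hfin : ∃ r > 0, volume (s r) ≠ ⊤ :=
    ⟨1, one_pos, ((measure_mono (Set.sep_subset _ _)).trans_lt
      (isCompact_cube 1).measure_lt_top).ne⟩
  have ht := tendsto_measure_biInter_gt (μ := volume) (s := s) (a := 0)
    (fun r _ => (hs r).measurableSet.nullMeasurableSet)
    (fun i j _ hij X hX => ⟨hX.1, hX.2.trans hij⟩) hfin
  have h0 : volume (⋂ r > 0, s r) = 0 := by
    refine measure_mono_null ?_ (ae_iff.1 (q1_ae_ne hc))
    intro X hX
    simp only [Set.mem_iInter] at hX
    have : |q1 c X| ≤ 0 := le_of_forall_gt_imp_ge_of_dense fun r hr => (hX r hr).2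
    simpa using this
  rw [h0] at ht
  have hev := ht.eventually (Iio_mem_nhds (ENNReal.ofReal_pos.2 hη))
  obtain ⟨δ, h1, h2⟩ := (hev.and self_mem_nhdsWithin).exists
  exact ⟨δ, h2, le_of_lt h1⟩

lemma q1_sub (c d : Fin 8 → ℝ) (X : V3) : q1 (c - d) X = q1 c X - q1 d X := by
  simp [q1]; ring

lemma q1_smul (a : ℝ) (c : Fin 8 → ℝ) (X : V3) : q1 (a • c) X = a * q1 c X := by
  simp [q1]; ring

/-- The level `δ` can be chosen uniformly for normalized coefficient vectors, because the unit
sphere of the coefficient space is compact and `q1 c` depends on `c` uniformly on the cube. -/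
lemma exists_uniform_sublevel {η : ℝ} (hη : 0 < η) :
    ∃ δ > 0, ∀ c ∈ Metric.sphere (0 : Fin 8 → ℝ) 1,
      volume {X ∈ cube 1 | |q1 c X| ≤ δ} ≤ ENNReal.ofReal η := by
  refine (isCompact_sphere (0 : Fin 8 → ℝ) 1).induction_on
    (p := fun s => ∃ δ > 0, ∀ c ∈ s, volume {X ∈ cube 1 | |q1 c X| ≤ δ} ≤ ENNReal.ofReal η)
    ⟨1, one_pos, by simp⟩ ?_ ?_ ?_
  · rintro s t hst ⟨δ, hδ, h⟩
    exact ⟨δ, hδ, fun c hc => h c (hst hc)⟩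
  · rintro s t ⟨δ, hδ, h⟩ ⟨ε, hε, h'⟩
    refine ⟨min δ ε, lt_min hδ hε, ?_⟩
    rintro c (hc | hc)
    · exact (measure_mono
        (fun X hX => ⟨hX.1, hX.2.trans (min_le_left _ _)⟩ : _ ⊆ {X ∈ cube 1 | |q1 c X| ≤ δ})).trans
        (h c hc)
    · exact (measure_mono
        (fun X hX => ⟨hX.1, hX.2.trans (min_le_right _ _)⟩ : _ ⊆ {X ∈ cube 1 | |q1 c X| ≤ ε})).trans
        (h' c hc)
  · intro c hc
    have hc0 : c ≠ 0 := by
      rintro rfl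
      simp at hc
    obtain ⟨δ, hδ, h⟩ := exists_sublevel_small hc0 hη
    refine ⟨Metric.ball c (δ / 16), mem_nhdsWithin_of_mem_nhds
      (Metric.ball_mem_nhds _ (by positivity)), δ / 2, by positivity, fun d hd => ?_⟩
    refine (measure_mono (t := {X ∈ cube 1 | |q1 c X| ≤ δ}) fun X hX => ⟨hX.1, ?_⟩).trans h
    have h1 := abs_q1_le (c - d) hX.1
    rw [q1_sub] at h1
    rw [Metric.mem_ball', dist_eq_norm] at hd
    have h2 := abs_sub_abs_le_abs_sub (q1 c X) (q1 d X)
    have h3 := hX.2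
    linarith

/-- On every subset of the unit cube of measure at least `γ`, the `L²` norm of a trilinear polynomial
controls its coefficients, with a constant depending only on `γ`. -/
lemma exists_unit_lower {γ : ℝ} (hγ : 0 < γ) :
    ∃ k > 0, ∀ S : Set V3, MeasurableSet S → S ⊆ cube 1 → ENNReal.ofReal γ ≤ volume S →
      ∀ c : Fin 8 → ℝ, k * ‖c‖ ^ 2 ≤ ∫ X in S, q1 c X ^ 2 := by
  obtain ⟨δ, hδ, h⟩ := exists_uniform_sublevel (half_pos hγ)
  refine ⟨δ ^ 2 * (γ / 2), by positivity, fun S hS hS1 hSγ => ?_⟩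
  have unit : ∀ c : Fin 8 → ℝ, ‖c‖ = 1 → δ ^ 2 * (γ / 2) ≤ ∫ X in S, q1 c X ^ 2 := by
    intro c hc
    -- At least half of `S` lies outside the sublevel set `E`, where `q1 c ^ 2 ≥ δ ^ 2`.
    have hE := h c (by simpa using hc)
    set E : Set V3 := {X ∈ cube 1 | |q1 c X| ≤ δ}
    have hEm : MeasurableSet E := ((isCompact_cube 1).isClosed.inter
      (isClosed_le (continuous_q1 c).abs continuous_const)).measurableSet
    have hfin : volume (S \ E) ≠ ⊤ := ((measure_mono (Set.sdiff_subset.trans hS1)).trans_lt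
      (isCompact_cube 1).measure_lt_top).ne
    have hvol : ENNReal.ofReal (γ / 2) ≤ volume (S \ E) := by
      refine le_trans ?_ (le_measure_sdiff ..)
      refine le_trans ?_ (tsub_le_tsub hSγ hE)
      rw [← ENNReal.ofReal_sub _ (by positivity)]
      exact ENNReal.ofReal_le_ofReal (by linarith)
    have hvol' : γ / 2 ≤ volume.real (S \ E) := (ENNReal.ofReal_le_iff_le_toReal hfin).1 hvol
    have hint := integrableOn_of_cube hS1 ((continuous_q1 c).pow 2)
    calc δ ^ 2 * (γ / 2) ≤ volume.real (S \ E) * δ ^ 2 := by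
          rw [mul_comm]; gcongr
      _ = ∫ X in S \ E, δ ^ 2 := by simp
      _ ≤ ∫ X in S \ E, q1 c X ^ 2 := by
          refine setIntegral_mono_on (integrableOn_const hfin)
            (hint.mono_set Set.sdiff_subset) (hS.diff hEm) fun X hX => ?_
          have : δ < |q1 c X| := by
            by_contra! hle
            exact hX.2 ⟨hS1 hX.1, hle⟩
          rw [← sq_abs (q1 c X)]
          gcongr
      _ ≤ ∫ X in S, q1 c X ^ 2 :=
          setIntegral_mono_set hint (.of_forall fun X => sq_nonneg _)
            Set.sdiff_subset.eventuallyLE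
  intro c
  by_cases hc : c = 0
  · subst hc; simpa using integral_nonneg fun X => sq_nonneg _
  have hn : 0 < ‖c‖ := norm_pos_iff.2 hc
  have := unit (‖c‖⁻¹ • c) (by rw [norm_smul]; simp [hn.ne'])
  simp_rw [q1_smul, mul_pow] at this
  rw [integral_const_mul] at this
  field_simp at this
  linarith

/-! ### Scaling to the cube of side `h` -/

/-- The coefficients of `X ↦ q1 c (h X)`: each monomial is weighted by `h` to its degree. -/
def scaleCoeff (h : ℝ) (c : Fin 8 → ℝ) : Fin 8 → ℝ :=
  ![c 0, h * c 1, h * c 2, h * c 3, h ^ 2 * c 4, h ^ 2 * c 5, h ^ 2 * c 6, h ^ 3 * c 7]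

lemma q1_scaleCoeff (h : ℝ) (c : Fin 8 → ℝ) (X : V3) :
    q1 (scaleCoeff h c) X = q1 c (h • X) := by
  simp [q1, scaleCoeff]; ring

open scoped Pointwise in
lemma exists_lower {γ : ℝ} (hγ : 0 < γ) :
    ∃ k > 0, ∀ h : ℝ, 0 < h → ∀ S : Set V3, MeasurableSet S → S ⊆ cube h →
      ENNReal.ofReal (γ * h ^ 3) ≤ volume S →
      ∀ c : Fin 8 → ℝ, k * h ^ 3 * ‖scaleCoeff h c‖ ^ 2 ≤ ∫ X in S, q1 c X ^ 2 := by
  obtain ⟨k, hk, H⟩ := exists_unit_lower hγ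
  refine ⟨k, hk, fun h hh S hS hSh hSγ c => ?_⟩
  have hdim : Module.finrank ℝ V3 = 3 := by simp
  have h1 := H (h⁻¹ • S) (hS.const_smul₀ _) ?_ ?_ (scaleCoeff h c)
  · simp_rw [q1_scaleCoeff] at h1
    rw [Measure.setIntegral_comp_smul_of_pos volume (fun X => q1 c X ^ 2) _ hh, hdim,
      smul_inv_smul₀ hh.ne', smul_eq_mul] at h1
    field_simp at h1
    linarith
  · rintro _ ⟨X, hX, rfl⟩ i
    have := hSh hX i
    simp only [PiLp.smul_apply, smul_eq_mul, Set.mem_Icc] at this ⊢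
    refine ⟨mul_nonneg (by positivity) this.1, ?_⟩
    rw [inv_mul_le_iff₀ hh]; linarith [this.2]
  · rw [Measure.addHaar_smul_of_nonneg _ (by positivity), hdim]
    calc ENNReal.ofReal γ = ENNReal.ofReal (h⁻¹ ^ 3) * ENNReal.ofReal (γ * h ^ 3) := by
          rw [← ENNReal.ofReal_mul (by positivity)]
          congr 1; field_simp
      _ ≤ _ := by gcongr

lemma abs_q1_le_scale {h : ℝ} (hh : 0 < h) (c : Fin 8 → ℝ) {X : V3} (hX : X ∈ cube h) :
    |q1 c X| ≤ 8 * ‖scaleCoeff h c‖ := by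
  have := abs_q1_le (scaleCoeff h c) (X := h⁻¹ • X) fun i => by
    have := hX i
    simp only [PiLp.smul_apply, smul_eq_mul, Set.mem_Icc] at this ⊢
    refine ⟨mul_nonneg (by positivity) this.1, ?_⟩
    rw [inv_mul_le_iff₀ hh]; linarith [this.2]
  rwa [q1_scaleCoeff, smul_inv_smul₀ hh.ne'] at this

/-! ### Directional derivatives -/

/-- The coefficients of the directional derivative of `q1 c` along `v`, again in `Q₁`. -/
def derivCoeff (c : Fin 8 → ℝ) (v : V3) : Fin 8 → ℝ :=
  ![v 0 * c 1 + v 1 * c 2 + v 2 * c 3, v 1 * c 4 + v 2 * c 5, v 0 * c 4 + v 2 * c 6,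
    v 0 * c 5 + v 1 * c 6, v 2 * c 7, v 1 * c 7, v 0 * c 7, 0]

lemma contDiff_q1 (c : Fin 8 → ℝ) : ContDiff ℝ 1 (q1 c) := by
  unfold q1; fun_prop

lemma fderiv_q1_apply (c : Fin 8 → ℝ) (X v : V3) :
    fderiv ℝ (q1 c) X v = q1 (derivCoeff c v) X := by
  have hx (i : Fin 3) :
      HasFDerivAt (fun x : V3 => x i) (EuclideanSpace.proj i : V3 →L[ℝ] ℝ) X :=
    (EuclideanSpace.proj i : V3 →L[ℝ] ℝ).hasFDerivAt
  have h : HasFDerivAt (q1 c) _ X :=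
    ((((((((hx 0).const_mul (c 1)).const_add (c 0)).add ((hx 1).const_mul (c 2))).add
      ((hx 2).const_mul (c 3))).add (((hx 0).mul (hx 1)).const_mul (c 4))).add
      (((hx 0).mul (hx 2)).const_mul (c 5))).add (((hx 1).mul (hx 2)).const_mul (c 6))).add
      ((((hx 0).mul (hx 1)).mul (hx 2)).const_mul (c 7))
  rw [h.fderiv]
  simp [q1, derivCoeff]
  ring

lemma smul_scaleCoeff_derivCoeff (h : ℝ) (c : Fin 8 → ℝ) (v : V3) :
    h • scaleCoeff h (derivCoeff c v) = derivCoeff (scaleCoeff h c) v := by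
  ext i
  fin_cases i <;> simp [scaleCoeff, derivCoeff] <;> ring

lemma norm_derivCoeff_le (c : Fin 8 → ℝ) {v : V3} (hv : ‖v‖ = 1) :
    ‖derivCoeff c v‖ ≤ 3 * ‖c‖ := by
  have hv' (i : Fin 3) : |v i| ≤ 1 := by
    rw [← hv]; exact PiLp.norm_apply_le v i
  have key (i : Fin 3) (j : Fin 8) : |v i * c j| ≤ ‖c‖ := by
    rw [abs_mul]
    exact (mul_le_of_le_one_left (abs_nonneg _) (hv' i)).trans (norm_le_pi_norm c j)
  have h0 := norm_nonneg c
  have h1 (i j) : |v i * c j| ≤ 3 * ‖c‖ := (key i j).trans (by linarith)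
  have h2 (i j k l) : |v i * c j + v k * c l| ≤ 3 * ‖c‖ :=
    (abs_add_le _ _).trans (by linarith [key i j, key k l])
  have h3 (i j k l m n) : |v i * c j + v k * c l + v m * c n| ≤ 3 * ‖c‖ :=
    (abs_add_three _ _ _).trans (by linarith [key i j, key k l, key m n])
  rw [pi_norm_le_iff_of_nonneg (by positivity)]
  simp only [Fin.forall_fin_succ, Real.norm_eq_abs]
  exact ⟨h3 .., h2 .., h2 .., h2 .., h1 .., h1 .., h1 .., by simp [derivCoeff], by simp⟩

/-- Inverse estimates at a point: `|∇p(F)·v|` is bounded by `h⁻¹ h^(-3/2)` times the `L²(S)` norm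
of `p`, and by `h^(-3/2)` times that of `∇p·v`, up to a constant depending only on `γ`. -/
lemma exists_pointwise {γ : ℝ} (hγ : 0 < γ) :
    ∃ K > 0, ∀ h : ℝ, 0 < h → ∀ S : Set V3, MeasurableSet S → S ⊆ cube h →
      ENNReal.ofReal (γ * h ^ 3) ≤ volume S → ∀ (c : Fin 8 → ℝ) (v : V3), ‖v‖ = 1 →
      ∀ F ∈ cube h,
        h ^ 3 * (h * q1 (derivCoeff c v) F) ^ 2 ≤ K * ∫ X in S, q1 c X ^ 2 ∧
        h ^ 3 * q1 (derivCoeff c v) F ^ 2 ≤ K * ∫ X in S, q1 (derivCoeff c v) X ^ 2 := by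
  obtain ⟨k, hk, H⟩ := exists_lower hγ
  have main : ∀ h : ℝ, 0 < h → ∀ S : Set V3, MeasurableSet S → S ⊆ cube h →
      ENNReal.ofReal (γ * h ^ 3) ≤ volume S → ∀ (c : Fin 8 → ℝ) (a : ℝ),
      |a| ≤ 24 * ‖scaleCoeff h c‖ → h ^ 3 * a ^ 2 ≤ 576 / k * ∫ X in S, q1 c X ^ 2 := by
    intro h hh S hS hSh hvol c a ha
    have h1 := H h hh S hS hSh hvol c
    have h2 : a ^ 2 ≤ (24 * ‖scaleCoeff h c‖) ^ 2 := by
      rw [← sq_abs]; gcongr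
    calc h ^ 3 * a ^ 2 ≤ h ^ 3 * (24 * ‖scaleCoeff h c‖) ^ 2 := by gcongr
      _ = 576 / k * (k * h ^ 3 * ‖scaleCoeff h c‖ ^ 2) := by field_simp; ring
      _ ≤ _ := by gcongr
  refine ⟨576 / k, by positivity, fun h hh S hS hSh hvol c v hv F hF =>
    ⟨main h hh S hS hSh hvol c _ ?_, main h hh S hS hSh hvol _ _ ?_⟩⟩
  · have h1 := abs_q1_le_scale hh (derivCoeff c v) hF
    have h2 := norm_derivCoeff_le (scaleCoeff h c) hv
    rw [← smul_scaleCoeff_derivCoeff, norm_smul, Real.norm_of_nonneg hh.le] at h2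
    rw [abs_mul, abs_of_pos hh]
    nlinarith
  · have h1 := abs_q1_le_scale hh (derivCoeff c v) hF
    linarith [norm_nonneg (scaleCoeff h (derivCoeff c v))]

/-! ### The stability estimate -/

lemma IsQ1.exists_q1 {p : V3 → ℝ} (hp : IsQ1 p) : ∃ c, p = q1 c := by
  obtain ⟨a₀, a₁, a₂, a₃, a₄, a₅, a₆, a₇, h⟩ := hp
  exact ⟨![a₀, a₁, a₂, a₃, a₄, a₅, a₆, a₇], funext fun x => by rw [h]; rfl⟩

lemma inner_sq_le {h : ℝ} {X F n : V3} (hX : X ∈ cube h) (hF : F ∈ cube h)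
    (hn : ‖n‖ = 1) : ⟪X - F, n⟫ ^ 2 ≤ 3 * h ^ 2 := by
  have h1 : |⟪X - F, n⟫| ≤ ‖X - F‖ := by
    simpa [hn] using abs_real_inner_le_norm (X - F) n
  have h2 : ‖X - F‖ ^ 2 ≤ 3 * h ^ 2 := by
    have hc (i : Fin 3) : (X i - F i) ^ 2 ≤ h ^ 2 := by
      have := hX i
      have := hF i
      simp only [Set.mem_Icc] at *
      apply sq_le_sq'  <;> linarith
    rw [EuclideanSpace.norm_sq_eq]
    simp [Fin.sum_univ_three]
    linarith [hc 0, hc 1, hc 2]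
  rw [← sq_abs]
  exact (by gcongr : |⟪X - F, n⟫| ^ 2 ≤ ‖X - F‖ ^ 2).trans h2

lemma setIntegral_le_of_le {h : ℝ} (hh : 0 ≤ h) {S : Set V3} (hS : MeasurableSet S)
    (hSh : S ⊆ cube h) {f u : V3 → ℝ} (hf : Continuous f) (hu : Continuous u) {B : ℝ}
    (hB : 0 ≤ B) (hle : ∀ X ∈ S, f X ≤ 2 * u X + B) :
    ∫ X in S, f X ≤ 2 * (∫ X in S, u X) + B * h ^ 3 := by
  have hvol : volume S ≤ ENNReal.ofReal (h ^ 3) := by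
    rw [ENNReal.ofReal_pow hh, ← volume_cube]; exact measure_mono hSh
  have hreal : volume.real S ≤ h ^ 3 := ENNReal.toReal_le_of_le_ofReal (by positivity) hvol
  have hfin : volume S ≠ ⊤ := (hvol.trans_lt ENNReal.ofReal_lt_top).ne
  have iu := (integrableOn_of_cube hSh hu).const_mul 2
  have ic : IntegrableOn (fun _ : V3 => B) S := integrableOn_const hfin
  calc ∫ X in S, f X ≤ ∫ X in S, (2 * u X + B) :=
        setIntegral_mono_on (integrableOn_of_cube hSh hf) (iu.add ic) hS hle
    _ = 2 * (∫ X in S, u X) + B * volume.real S := by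
        rw [integral_add iu ic, integral_const_mul]; simp [mul_comm]
    _ ≤ _ := by gcongr

lemma sqrt_le_mul_sqrt {K r I J : ℝ} (hK : 0 ≤ K) (hr : 0 ≤ r)
    (hIJ : I ≤ (2 + 6 * K) * r ^ 2 * J) : √I ≤ √(2 + 6 * K) * r * √J := by
  have : √(2 + 6 * K) * r * √J = √((2 + 6 * K) * r ^ 2 * J) := by
    rw [Real.sqrt_mul (by positivity), Real.sqrt_mul (by positivity), Real.sqrt_sq hr]
  rw [this]
  exact Real.sqrt_le_sqrt hIJ

/-- Stability estimate of Lemmas 4.3/4.4 for the inverse extension operator `C_T⁻¹`, with the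
coefficient-ratio factor `β⁺/β⁻`: `|C_T⁻¹(p)|_{H^j(S)} ≤ C (β⁺/β⁻) |p|_{H^j(S)}` for
`j = 0, 1` (the two conjuncts below). -/
theorem CTinv_stability (γ : ℝ) (hγ0 : 0 < γ) (hγ1 : γ ≤ 1) :
    ∃ C : ℝ, 0 < C ∧
      ∀ (h : ℝ), 0 < h →
      ∀ (F nbar : V3), ‖nbar‖ = 1 →
      ∀ (βm βp : ℝ), 0 < βm → βm ≤ βp →
      ∀ (P S : Set V3), IsTetra P → MeasurableSet S → P ⊆ S → S ⊆ cube h →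
        ENNReal.ofReal (γ * h ^ 3) ≤ volume P → F ∈ closure P →
      ∀ p : V3 → ℝ, IsQ1 p →
        Real.sqrt (∫ X in S, (CTinv βm βp F nbar p X) ^ 2) ≤
            C * (βp / βm) * Real.sqrt (∫ X in S, (p X) ^ 2) ∧
        Real.sqrt (∫ X in S, ‖fderiv ℝ (CTinv βm βp F nbar p) X‖ ^ 2) ≤
            C * (βp / βm) * Real.sqrt (∫ X in S, ‖fderiv ℝ p X‖ ^ 2) := by
  obtain ⟨K, hK, H⟩ := exists_pointwise hγ0
  refine ⟨√(2 + 6 * K), by positivity, ?_⟩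
  intro h hh F nbar hn βm βp hm hmp P S _ hS hPS hSh hvol hF p hp
  obtain ⟨c, rfl⟩ := hp.exists_q1
  have hF' : F ∈ cube h := closure_minimal (hPS.trans hSh) (isCompact_cube h).isClosed hF
  -- Only `vol S ≥ γ h³` and `F ∈ [0,h]³` are extracted from the tetrahedron.
  obtain ⟨H0, H1⟩ := H h hh S hS hSh (hvol.trans (measure_mono hPS)) c nbar hn F hF'
  have hs : 0 ≤ βp / βm - 1 := by
    rw [sub_nonneg, one_le_div hm]; exact hmp
  set r := βp / βm
  set g := q1 (derivCoeff c nbar) F with hg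
  have hr : 1 ≤ r := by linarith
  have hrr : (r - 1) ^ 2 ≤ r ^ 2 := by gcongr; linarith
  have h1r : 1 ≤ r ^ 2 := one_le_pow₀ hr
  have hCT : CTinv βm βp F nbar (q1 c) = fun X => q1 c X + (r - 1) * g * ⟪X - F, nbar⟫ := by
    ext X; rw [CTinv, fderiv_q1_apply]
  have hJ0 : 0 ≤ ∫ X in S, q1 c X ^ 2 := integral_nonneg fun X => sq_nonneg _
  have hJ1 : 0 ≤ ∫ X in S, ‖fderiv ℝ (q1 c) X‖ ^ 2 := integral_nonneg fun X => sq_nonneg _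
  rw [hCT]
  constructor
  · refine sqrt_le_mul_sqrt hK.le (by linarith) ?_
    have hb : ∫ X in S, (q1 c X + (r - 1) * g * ⟪X - F, nbar⟫) ^ 2 ≤
        2 * (∫ X in S, q1 c X ^ 2) + (6 * ((r - 1) ^ 2 * (h * g) ^ 2)) * h ^ 3 := by
      refine setIntegral_le_of_le hh.le hS hSh ?_ ((continuous_q1 c).pow 2) (by positivity) ?_
      · have := continuous_q1 c
        fun_prop
      intro X hX
      simp only [Pi.pow_apply]
      have hL := inner_sq_le (hSh hX) hF' hn
      nlinarith [sq_nonneg (q1 c X - (r - 1) * g * ⟪X - F, nbar⟫),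
        mul_le_mul_of_nonneg_left hL (sq_nonneg ((r - 1) * g))]
    nlinarith [mul_le_mul_of_nonneg_left H0 (sq_nonneg (r - 1)),
      mul_le_mul_of_nonneg_right hrr (mul_nonneg hK.le hJ0),
      mul_le_mul_of_nonneg_right h1r hJ0]
  · refine sqrt_le_mul_sqrt hK.le (by linarith) ?_
    have hfd (X : V3) : fderiv ℝ (fun X => q1 c X + (r - 1) * g * ⟪X - F, nbar⟫) X =
        fderiv ℝ (q1 c) X + ((r - 1) * g) • innerSL ℝ nbar := by
      have h2 : HasFDerivAt (fun X : V3 => ⟪X - F, nbar⟫) (innerSL ℝ nbar) X := by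
        have := (innerSL ℝ nbar).hasFDerivAt (x := X - F) |>.comp X ((hasFDerivAt_id X).sub_const F)
        refine this.congr_of_eventuallyEq (.of_forall fun Y => ?_)
        simp [real_inner_comm]
      have h3 : HasFDerivAt (q1 c) (fderiv ℝ (q1 c) X) X :=
        ((contDiff_q1 c).differentiable (by simp) X).hasFDerivAt
      exact (h3.add (h2.const_mul _)).fderiv
    have hcont : Continuous (fderiv ℝ (q1 c)) := (contDiff_q1 c).continuous_fderiv (by simp)
    simp_rw [hfd]
    have hb : ∫ X in S, ‖fderiv ℝ (q1 c) X + ((r - 1) * g) • innerSL ℝ nbar‖ ^ 2 ≤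
        2 * (∫ X in S, ‖fderiv ℝ (q1 c) X‖ ^ 2) + (2 * ((r - 1) ^ 2 * g ^ 2)) * h ^ 3 := by
      refine setIntegral_le_of_le hh.le hS hSh ?_ (hcont.norm.pow 2) (by positivity) ?_
      · fun_prop
      intro X hX
      simp only [Pi.pow_apply]
      have h1 : ‖fderiv ℝ (q1 c) X + ((r - 1) * g) • innerSL ℝ nbar‖ ≤
          ‖fderiv ℝ (q1 c) X‖ + |(r - 1) * g| := by
        refine (norm_add_le _ _).trans ?_
        rw [norm_smul, innerSL_apply_norm, hn, mul_one, Real.norm_eq_abs]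
      have h2 : ‖fderiv ℝ (q1 c) X + ((r - 1) * g) • innerSL ℝ nbar‖ ^ 2 ≤
          (‖fderiv ℝ (q1 c) X‖ + |(r - 1) * g|) ^ 2 := by gcongr
      nlinarith [sq_nonneg (‖fderiv ℝ (q1 c) X‖ - |(r - 1) * g|), sq_abs ((r - 1) * g)]
    -- `∇p · n̄` is itself in `Q₁`, and it is dominated pointwise by `‖∇p‖` because `‖n̄‖ = 1`.
    have H1' : h ^ 3 * g ^ 2 ≤ K * ∫ X in S, ‖fderiv ℝ (q1 c) X‖ ^ 2 := by
      refine H1.trans (mul_le_mul_of_nonneg_left ?_ hK.le)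
      refine setIntegral_mono_on (integrableOn_of_cube hSh ((continuous_q1 _).pow 2))
        (integrableOn_of_cube hSh (hcont.norm.pow 2)) hS fun X _ => ?_
      rw [← fderiv_q1_apply, ← sq_abs, ← Real.norm_eq_abs]
      gcongr
      exact (ContinuousLinearMap.le_opNorm _ _).trans (by rw [hn, mul_one])
    nlinarith [mul_le_mul_of_nonneg_left H1' (sq_nonneg (r - 1)),
      mul_le_mul_of_nonneg_right hrr (mul_nonneg hK.le hJ1),
      mul_le_mul_of_nonneg_right h1r hJ1, mul_nonneg (sq_nonneg r) (mul_nonneg hK.le hJ1)]
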